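/- Let f: A → B be a homomorphism of MV-algebras, and let S(f): S(A) → S(B) be the induced homomorphism [a] ↦ [f(a)]. Then the canonical homomorphism A → {(b,u) ∈ B × S(A) : η_B(b) = S(f)(u)}, a ↦ (f(a), [a]), is an isomorphism (i.e. the naturality square of η at f is a pullback, so f is a trivial extension for the Galois structure of the semisimple reflection) if and only if P(f): P(A) → P(B) is an isomorphism, or (Rad(A)={0}, A is nontrivial, and B is trivial). -/

import Mathlib

namespace MVPaper

/-- An MV-algebra: a set with a binary `⊕`, a unary `¬`, and a constant `0`
satisfying the MV-algebra axioms. -/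
class MV (α : Type*) where
  oplus : α → α → α
  neg : α → α
  zero : α
  oplus_assoc : ∀ x y z : α, oplus x (oplus y z) = oplus (oplus x y) z
  oplus_comm : ∀ x y : α, oplus x y = oplus y x
  oplus_zero : ∀ x : α, oplus x zero = x
  neg_neg : ∀ x : α, neg (neg x) = x
  oplus_neg_zero : ∀ x : α, oplus x (neg zero) = neg zero
  lukasiewicz : ∀ x y : α,
    oplus (neg (oplus (neg x) y)) y = oplus (neg (oplus (neg y) x)) x

namespace MV

variable {α : Type*} [MV α]

/-- `1 := ¬0`. -/
def one : α := neg zero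

/-- `x ⊙ y := ¬(¬x ⊕ ¬y)`. -/
def odot (x y : α) : α := neg (oplus (neg x) (neg y))

/-- `x ⊖ y := ¬(¬x ⊕ y)`. -/
def ominus (x y : α) : α := neg (oplus (neg x) y)

/-- `d(x,y) := (x ⊖ y) ⊕ (y ⊖ x)`. -/
def dist (x y : α) : α := oplus (ominus x y) (ominus y x)

/-- The natural order: `x ≤ y` iff `¬x ⊕ y = 1`. -/
def le (x y : α) : Prop := oplus (neg x) y = one

/-- `x ∨ y := (x ⊖ y) ⊕ y`. -/
def sup (x y : α) : α := oplus (ominus x y) y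

/-- `x ∧ y := x ⊙ (¬x ⊕ y)`. -/
def inf (x y : α) : α := odot x (oplus (neg x) y)

/-- `n · a`, the `n`-fold sum `a ⊕ ⋯ ⊕ a`. -/
def nsmul : ℕ → α → α
  | 0, _ => zero
  | n + 1, a => oplus a (nsmul n a)

end MV

/-- Products of MV-algebras, with componentwise operations. -/
instance prodMV {α β : Type*} [MV α] [MV β] : MV (α × β) where
  oplus x y := (MV.oplus x.1 y.1, MV.oplus x.2 y.2)
  neg x := (MV.neg x.1, MV.neg x.2)
  zero := (MV.zero, MV.zero)
  oplus_assoc x y z :=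
    congrArg₂ Prod.mk (MV.oplus_assoc _ _ _) (MV.oplus_assoc _ _ _)
  oplus_comm x y :=
    congrArg₂ Prod.mk (MV.oplus_comm _ _) (MV.oplus_comm _ _)
  oplus_zero x := by
    obtain ⟨a, b⟩ := x
    exact congrArg₂ Prod.mk (MV.oplus_zero a) (MV.oplus_zero b)
  neg_neg x := by
    obtain ⟨a, b⟩ := x
    exact congrArg₂ Prod.mk (MV.neg_neg a) (MV.neg_neg b)
  oplus_neg_zero x :=
    congrArg₂ Prod.mk (MV.oplus_neg_zero _) (MV.oplus_neg_zero _)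
  lukasiewicz x y :=
    congrArg₂ Prod.mk (MV.lukasiewicz _ _) (MV.lukasiewicz _ _)

/-- A homomorphism of MV-algebras: a map preserving `⊕`, `¬` and `0`. -/
structure IsHom {α β : Type*} [MV α] [MV β] (f : α → β) : Prop where
  map_zero : f MV.zero = MV.zero
  map_oplus : ∀ x y : α, f (MV.oplus x y) = MV.oplus (f x) (f y)
  map_neg : ∀ x : α, f (MV.neg x) = MV.neg (f x)

/-- An ideal of an MV-algebra: contains `0`, closed under `⊕`, downward closed. -/
structure IsIdeal {α : Type*} [MV α] (I : Set α) : Prop where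
  zero_mem : MV.zero ∈ I
  oplus_mem : ∀ ⦃x⦄, x ∈ I → ∀ ⦃y⦄, y ∈ I → MV.oplus x y ∈ I
  lower_mem : ∀ ⦃x⦄, x ∈ I → ∀ ⦃y⦄, MV.le y x → y ∈ I

/-- The kernel of a homomorphism. -/
def ker {α β : Type*} [MV α] [MV β] (f : α → β) : Set α := {x | f x = MV.zero}

/-- The radical of an MV-algebra: `Rad(A) = {a | n·a ≤ ¬a for all n}`
(the intersection of all maximal proper ideals). -/
def Rad (α : Type*) [MV α] : Set α :=
  {a | ∀ n : ℕ, MV.le (MV.nsmul n a) (MV.neg a)}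

/-- `P(A) := Rad(A) ∪ ¬Rad(A)`. -/
def PSet (α : Type*) [MV α] : Set α :=
  Rad α ∪ {x | MV.neg x ∈ Rad α}

/-- An MV-algebra is trivial if `0 = 1`. -/
def IsTrivial (α : Type*) [MV α] : Prop := (MV.zero : α) = MV.one

/-- An MV-algebra is semisimple if its radical is trivial. -/
def Semisimple (α : Type*) [MV α] : Prop := Rad α = ({MV.zero} : Set α)

/-- An MV-algebra is perfect if `A = Rad(A) ∪ ¬Rad(A)`. -/
def Perfect (α : Type*) [MV α] : Prop := ∀ a : α, a ∈ PSet α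

/-- `q : α → Q` realizes `Q` as the quotient of `α` by the ideal `I`,
i.e. by the congruence `x ∼ y ↔ d(x,y) ∈ I`. -/
structure IsQuotientBy {α Q : Type*} [MV α] [MV Q] (I : Set α) (q : α → Q) : Prop where
  hom : IsHom q
  surj : Function.Surjective q
  eq_iff : ∀ x y : α, q x = q y ↔ MV.dist x y ∈ I

namespace MV

variable {α : Type*} [MV α]

theorem zero_oplus (x : α) : oplus zero x = x := by
  rw [oplus_comm, oplus_zero]

theorem neg_oplus_self (x : α) : oplus (neg x) x = neg zero := by
  have h := lukasiewicz (neg zero) x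
  rwa [neg_neg, zero_oplus, oplus_neg_zero] at h

theorem ominus_self (x : α) : ominus x x = zero := by
  rw [ominus, neg_oplus_self, neg_neg]

theorem ominus_zero (x : α) : ominus x zero = x := by
  rw [ominus, oplus_zero, neg_neg]

theorem zero_ominus (x : α) : ominus zero x = zero := by
  rw [ominus, oplus_comm, oplus_neg_zero, neg_neg]

theorem dist_zero (x : α) : dist x zero = x := by
  rw [dist, ominus_zero, zero_ominus, oplus_zero]

theorem ominus_oplus_comm (x y : α) :
    oplus (ominus x y) y = oplus (ominus y x) x :=
  lukasiewicz x y

theorem eq_of_ominus_eq_zero {x y : α} (hxy : ominus x y = zero) (hyx : ominus y x = zero) :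
    x = y := by
  have h := ominus_oplus_comm x y
  rw [hxy, hyx, zero_oplus, zero_oplus] at h
  exact h.symm

theorem ominus_ominus_comm (x y : α) : ominus x (ominus x y) = ominus y (ominus y x) := by
  have h := lukasiewicz (neg y) (neg x)
  rw [neg_neg, neg_neg] at h
  simp only [ominus]
  rw [oplus_comm (neg x) y, oplus_comm (neg y) x, oplus_comm (neg x), oplus_comm (neg y), h]

theorem ominus_ominus_self (x y : α) : ominus (ominus x y) x = zero := by
  simp only [ominus]
  rw [neg_neg, oplus_comm (neg x) y, ← oplus_assoc, neg_oplus_self, oplus_neg_zero, neg_neg]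

/-- Any `y` is recovered from `x` by removing the excess `x ⊖ y` and adding the defect `y ⊖ x`. -/
theorem ominus_ominus_oplus_ominus (x y : α) :
    oplus (ominus x (ominus x y)) (ominus y x) = y := by
  rw [ominus_ominus_comm, ominus_oplus_comm, ominus_ominus_self, zero_oplus]

theorem eq_zero_of_isTrivial (h : IsTrivial α) (x : α) : x = zero := by
  have h' : (zero : α) = neg zero := h
  rw [← oplus_zero x, h', oplus_neg_zero]

end MV

theorem IsHom.map_ominus {α β : Type*} [MV α] [MV β] {f : α → β} (hf : IsHom f) (x y : α) :
    f (MV.ominus x y) = MV.ominus (f x) (f y) := by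
  simp only [MV.ominus, hf.map_neg, hf.map_oplus]

theorem isTrivial_of_one_mem_Rad {α : Type*} [MV α] (h : MV.neg MV.zero ∈ Rad α) :
    IsTrivial α := by
  have h1 : MV.oplus (MV.neg (MV.oplus (MV.neg MV.zero) MV.zero)) (MV.neg (MV.neg MV.zero))
      = (MV.neg MV.zero : α) := h 1
  rwa [MV.oplus_zero, MV.neg_neg, MV.oplus_zero] at h1

namespace IsQuotientBy

variable {α Q : Type*} [MV α] [MV Q] {q : α → Q}

theorem mem_iff {I : Set α} (hq : IsQuotientBy I q) (x : α) : x ∈ I ↔ q x = MV.zero := by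
  rw [← hq.hom.map_zero, hq.eq_iff, MV.dist_zero]

theorem isTrivial_of_mem_of_neg_mem (hq : IsQuotientBy (Rad α) q) {x : α}
    (hx : x ∈ Rad α) (hx' : MV.neg x ∈ Rad α) : IsTrivial α := by
  rw [hq.mem_iff] at hx hx'
  apply isTrivial_of_one_mem_Rad
  rw [hq.mem_iff, hq.hom.map_neg, hq.hom.map_zero, ← hx, ← hq.hom.map_neg, hx', hx]

end IsQuotientBy

section Square

variable {α β SA SB : Type*} [MV α] [MV β] [MV SA] [MV SB]
  {f : α → β} {ηA : α → SA} {ηB : β → SB} {Sf : SA → SB}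

theorem mapsTo_Rad (hηA : IsQuotientBy (Rad α) ηA) (hηB : IsQuotientBy (Rad β) ηB)
    (hSf : IsHom Sf) (hnat : Sf ∘ ηA = ηB ∘ f) : Set.MapsTo f (Rad α) (Rad β) := by
  intro a ha
  have h : Sf (ηA a) = ηB (f a) := congrFun hnat a
  rw [hηB.mem_iff, ← h, (hηA.mem_iff a).1 ha, hSf.map_zero]

/-- The square is a pullback iff `f` restricts to a bijection between the radicals. -/
theorem pullback_iff_bijOn_Rad (hf : IsHom f)
    (hηA : IsQuotientBy (Rad α) ηA) (hηB : IsQuotientBy (Rad β) ηB)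
    (hSf : IsHom Sf) (hnat : Sf ∘ ηA = ηB ∘ f) :
    (Function.Injective (fun a : α => ((f a, ηA a) : β × SA)) ∧
      Set.range (fun a : α => ((f a, ηA a) : β × SA))
        = {p : β × SA | ηB p.1 = Sf p.2}) ↔
    Set.BijOn f (Rad α) (Rad β) := by
  have hn : ∀ a, Sf (ηA a) = ηB (f a) := congrFun hnat
  constructor
  · rintro ⟨hinj, hrange⟩
    refine ⟨mapsTo_Rad hηA hηB hSf hnat, ?_, ?_⟩
    · intro a ha a' ha' h
      rw [hηA.mem_iff] at ha ha'
      exact hinj (Prod.ext h (ha.trans ha'.symm))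
    · intro b hb
      have hmem : ((b, MV.zero) : β × SA) ∈ {p : β × SA | ηB p.1 = Sf p.2} :=
        ((hηB.mem_iff b).1 hb).trans hSf.map_zero.symm
      rw [← hrange] at hmem
      obtain ⟨a, ha⟩ := hmem
      exact ⟨a, (hηA.mem_iff a).2 (congrArg Prod.snd ha), congrArg Prod.fst ha⟩
  · rintro ⟨-, hinj, hsurj⟩
    constructor
    · intro a a' h
      have hfa : f a = f a' := congrArg Prod.fst h
      have hηa : ηA a = ηA a' := congrArg Prod.snd h
      have key : ∀ x y, f x = f y → ηA x = ηA y → MV.ominus x y = MV.zero := by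
        intro x y h1 h2
        apply hinj
        · rw [hηA.mem_iff, hηA.hom.map_ominus, h2, MV.ominus_self]
        · rw [hηA.mem_iff, hηA.hom.map_zero]
        · rw [hf.map_ominus, h1, MV.ominus_self, hf.map_zero]
      exact MV.eq_of_ominus_eq_zero (key _ _ hfa hηa) (key _ _ hfa.symm hηa.symm)
    · ext ⟨b, u⟩
      constructor
      · rintro ⟨a, ha⟩
        rw [← ha]
        exact (hn a).symm
      · intro h
        obtain ⟨a, rfl⟩ := hηA.surj u
        have hb : ηB b = ηB (f a) := Eq.trans h (hn a)
        obtain ⟨r, hr, hfr⟩ : MV.ominus b (f a) ∈ f '' Rad α := hsurj <| by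
          rw [hηB.mem_iff, hηB.hom.map_ominus, hb, MV.ominus_self]
        obtain ⟨s, hs, hfs⟩ : MV.ominus (f a) b ∈ f '' Rad α := hsurj <| by
          rw [hηB.mem_iff, hηB.hom.map_ominus, hb, MV.ominus_self]
        rw [hηA.mem_iff] at hr hs
        refine ⟨MV.oplus (MV.ominus a s) r, Prod.ext ?_ ?_⟩
        · change f _ = b
          rw [hf.map_oplus, hf.map_ominus, hfr, hfs, MV.ominus_ominus_oplus_ominus]
        · change ηA _ = ηA a
          rw [hηA.hom.map_oplus, hηA.hom.map_ominus, hr, hs, MV.ominus_zero, MV.oplus_zero]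

end Square

/-- A homomorphism `f : A → B` is a trivial extension for the Galois structure
of the semisimple reflection — i.e. the canonical map
`A → {(b,u) ∈ B × S(A) : η_B b = S(f) u}`, `a ↦ (f a, [a])`, is an
isomorphism — iff `P(f) : P(A) → P(B)` is an isomorphism, or `Rad(A) = {0}`,
`A` is nontrivial and `B` is trivial. -/
theorem trivial_extension_iff {α β SA SB : Type*} [MV α] [MV β] [MV SA] [MV SB]
    {f : α → β} (hf : IsHom f)
    {ηA : α → SA} (hηA : IsQuotientBy (Rad α) ηA)
    {ηB : β → SB} (hηB : IsQuotientBy (Rad β) ηB)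
    {Sf : SA → SB} (hSf : IsHom Sf) (hnat : Sf ∘ ηA = ηB ∘ f) :
    (Function.Injective (fun a : α => ((f a, ηA a) : β × SA)) ∧
      Set.range (fun a : α => ((f a, ηA a) : β × SA))
        = {p : β × SA | ηB p.1 = Sf p.2}) ↔
    (Set.BijOn f (PSet α) (PSet β) ∨
      (Rad α = ({MV.zero} : Set α) ∧ ¬ IsTrivial α ∧ IsTrivial β)) := by
  rw [pullback_iff_bijOn_Rad hf hηA hηB hSf hnat]
  have hmaps := mapsTo_Rad hηA hηB hSf hnat
  have zero_mem : (MV.zero : α) ∈ Rad α := (hηA.mem_iff _).2 hηA.hom.map_zero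
  constructor
  · intro h
    by_cases hβ : IsTrivial β
    · have hRad : Rad α = {MV.zero} := by
        refine Set.eq_singleton_iff_unique_mem.2 ⟨zero_mem, fun a ha => ?_⟩
        refine h.injOn ha zero_mem ?_
        rw [MV.eq_zero_of_isTrivial hβ (f a), hf.map_zero]
      by_cases hα : IsTrivial α
      · refine Or.inl ⟨fun a _ => ?_, fun a _ a' _ _ => ?_, fun b _ => ?_⟩
        · rw [MV.eq_zero_of_isTrivial hα a]
          exact Or.inl (hmaps zero_mem)
        · rw [MV.eq_zero_of_isTrivial hα a, MV.eq_zero_of_isTrivial hα a']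
        · exact ⟨MV.zero, Or.inl zero_mem, by rw [hf.map_zero, MV.eq_zero_of_isTrivial hβ b]⟩
      · exact Or.inr ⟨hRad, hα, hβ⟩
    · have hneg : ∀ a, MV.neg a ∈ Rad α → MV.neg (f a) ∈ Rad β := fun a ha => by
        rw [← hf.map_neg]
        exact hmaps ha
      refine Or.inl ⟨fun a ha => ha.imp (fun h => hmaps h) (hneg a), ?_, ?_⟩
      · rintro a (ha | ha) a' (ha' | ha') haa'
        · exact h.injOn ha ha' haa'
        · have hb := hneg a' ha'
          rw [← haa'] at hb
          exact absurd (hηB.isTrivial_of_mem_of_neg_mem (hmaps ha) hb) hβ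
        · have hb := hneg a ha
          rw [haa'] at hb
          exact absurd (hηB.isTrivial_of_mem_of_neg_mem (hmaps ha') hb) hβ
        · have hn : MV.neg a = MV.neg a' :=
            h.injOn ha ha' (by rw [hf.map_neg, hf.map_neg, haa'])
          rw [← MV.neg_neg a, hn, MV.neg_neg]
      · rintro b (hb | hb)
        · obtain ⟨a, ha, rfl⟩ := h.surjOn hb
          exact ⟨a, Or.inl ha, rfl⟩
        · obtain ⟨a, ha, hab⟩ := h.surjOn hb
          refine ⟨MV.neg a, Or.inr ?_, by rw [hf.map_neg, hab, MV.neg_neg]⟩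
          rwa [Set.mem_ofPred_eq, MV.neg_neg]
  · rintro (h | ⟨hRad, -, hβ⟩)
    · refine ⟨hmaps, h.injOn.mono Set.subset_union_left, fun b hb => ?_⟩
      obtain ⟨a, ha | ha, rfl⟩ := h.surjOn (Or.inl hb)
      · exact ⟨a, ha, rfl⟩
      · have hn := hmaps ha
        rw [hf.map_neg] at hn
        have hβ := hηB.isTrivial_of_mem_of_neg_mem hb hn
        exact ⟨MV.zero, zero_mem, by rw [hf.map_zero, MV.eq_zero_of_isTrivial hβ (f a)]⟩
    · refine ⟨hmaps, ?_, fun b _ => ?_⟩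
      · rw [hRad]
        exact Set.injOn_singleton f _
      · exact ⟨MV.zero, zero_mem, by rw [hf.map_zero, MV.eq_zero_of_isTrivial hβ b]⟩

end MVPaper
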